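/- Let n, m ≥ 1 and let Γ be a metric-compatible (0,1)-soliton on the trivial bundle ℝⁿ × ℝᵐ whose curvature satisfies |F(x)| ≤ 3/8 for every x ∈ ℝⁿ. Then Γ is flat, i.e. F_{ij}(x) = 0 for all indices i, j and all x ∈ ℝⁿ. -/

import Mathlib

open MeasureTheory Real Filter Matrix
open scoped ENNReal

noncomputable section

namespace YM

variable {n m : ℕ}

/-- A connection on the trivial bundle `ℝⁿ × ℝᵐ`, given by its coefficient
matrices `Γ₁(x), …, Γₙ(x)`. -/
abbrev Conn (n m : ℕ) :=
  (Fin n → ℝ) → Fin n → Matrix (Fin m) (Fin m) ℝ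

/-- Entrywise `i`-th partial derivative of a matrix-valued map on `ℝⁿ`. -/
def pder (i : Fin n) (A : (Fin n → ℝ) → Matrix (Fin m) (Fin m) ℝ)
    (x : Fin n → ℝ) : Matrix (Fin m) (Fin m) ℝ :=
  Matrix.of fun a b => fderiv ℝ (fun y => A y a b) x (Pi.single i 1)

/-- Smoothness (entrywise) of a matrix-valued map on `ℝⁿ`. -/
def SmoothMat (A : (Fin n → ℝ) → Matrix (Fin m) (Fin m) ℝ) : Prop :=
  ∀ a b, ContDiff ℝ (⊤ : ℕ∞) fun y => A y a b

/-- Smoothness of a connection. -/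
def Smooth (Γ : Conn n m) : Prop :=
  ∀ i, SmoothMat fun x => Γ x i

/-- Matrix commutator. -/
def comm (A B : Matrix (Fin m) (Fin m) ℝ) : Matrix (Fin m) (Fin m) ℝ :=
  A * B - B * A

/-- Curvature `F_{ij} = ∂ᵢΓⱼ − ∂ⱼΓᵢ + [Γᵢ, Γⱼ]`. -/
def curv (Γ : Conn n m) (i j : Fin n) (x : Fin n → ℝ) :
    Matrix (Fin m) (Fin m) ℝ :=
  pder i (fun y => Γ y j) x - pder j (fun y => Γ y i) x + comm (Γ x i) (Γ x j)

/-- Covariant derivative `∇ᵢA = ∂ᵢA + [Γᵢ, A]`. -/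
def covDer (Γ : Conn n m) (i : Fin n)
    (A : (Fin n → ℝ) → Matrix (Fin m) (Fin m) ℝ) (x : Fin n → ℝ) :
    Matrix (Fin m) (Fin m) ℝ :=
  pder i A x + comm (Γ x i) (A x)

/-- `(D*F)ₖ = −Σᵢ ∇ᵢF_{ik}`. -/
def dstarF (Γ : Conn n m) (k : Fin n) (x : Fin n → ℝ) :
    Matrix (Fin m) (Fin m) ℝ :=
  - ∑ i, covDer Γ i (fun y => curv Γ i k y) x

/-- Squared Frobenius norm of a matrix. -/
def frobSq (A : Matrix (Fin m) (Fin m) ℝ) : ℝ := ∑ a, ∑ b, (A a b) ^ 2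

/-- Frobenius norm of a matrix. -/
def frobNorm (A : Matrix (Fin m) (Fin m) ℝ) : ℝ := Real.sqrt (frobSq A)

/-- Frobenius inner product `⟨A, B⟩ = tr(A Bᵀ)`. -/
def frobInner (A B : Matrix (Fin m) (Fin m) ℝ) : ℝ := ∑ a, ∑ b, A a b * B a b

/-- `|F(x)|² = Σ_{i,j} ‖F_{ij}(x)‖²` (Frobenius norms). -/
def normSqF (Γ : Conn n m) (x : Fin n → ℝ) : ℝ :=
  ∑ i, ∑ j, frobSq (curv Γ i j x)

/-- `|F(x)|`. -/
def normF (Γ : Conn n m) (x : Fin n → ℝ) : ℝ := Real.sqrt (normSqF Γ x)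

/-- Euclidean norm on `ℝⁿ`. -/
def enorm (x : Fin n → ℝ) : ℝ := Real.sqrt (∑ i, x i ^ 2)

/-- Metric compatibility: all coefficient matrices are skew-symmetric. -/
def MetricCompat (Γ : Conn n m) : Prop :=
  ∀ x i, (Γ x i)ᵀ = -(Γ x i)

/-- `(x₀,t₀)`-soliton: `Σᵢ ∇ᵢF_{ik} = (1/(2t₀)) Σᵢ (x−x₀)ᵢ F_{ik}`. -/
def IsSolitonAt (Γ : Conn n m) (x₀ : Fin n → ℝ) (t₀ : ℝ) : Prop :=
  ∀ (x : Fin n → ℝ) (k : Fin n),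
    ∑ i, covDer Γ i (fun y => curv Γ i k y) x
      = (1 / (2 * t₀)) • ∑ i, (x i - x₀ i) • curv Γ i k x

/-- `(0,1)`-soliton. -/
def IsSoliton (Γ : Conn n m) : Prop := IsSolitonAt Γ 0 1

/-- The `ℱ`-functional
`ℱ_{x₀,t₀}(Γ) = t₀² (4πt₀)^{−n/2} ∫ |F|² e^{−|x−x₀|²/(4t₀)}`. -/
def Ffunc (Γ : Conn n m) (x₀ : Fin n → ℝ) (t₀ : ℝ) : ℝ :=
  t₀ ^ 2 * (4 * π * t₀) ^ (-(n : ℝ) / 2) *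
    ∫ x : Fin n → ℝ,
      normSqF Γ x * Real.exp (-(∑ i, (x i - x₀ i) ^ 2) / (4 * t₀))

/-- The entropy `λ(Γ) = sup_{x₀, t₀>0} ℱ_{x₀,t₀}(Γ)`, valued in `[0,∞]`. -/
def entropy (Γ : Conn n m) : ℝ≥0∞ :=
  ⨆ (x₀ : Fin n → ℝ) (t₀ : ℝ) (_ : 0 < t₀), ENNReal.ofReal (Ffunc Γ x₀ t₀)

/-- Polynomial curvature growth: `|F(x)| ≤ p(|x|)`. -/
def PolyCurvGrowth (Γ : Conn n m) : Prop :=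
  ∃ p : Polynomial ℝ, ∀ x, normF Γ x ≤ p.eval (enorm x)

/-- Polynomial curvature growth to order two. -/
def PolyCurvGrowth2 (Γ : Conn n m) : Prop :=
  ∃ p : Polynomial ℝ, ∀ x,
    normF Γ x
      + (∑ i, ∑ j, ∑ k, frobNorm (covDer Γ i (fun y => curv Γ j k y) x))
      + (∑ i, ∑ j, ∑ k, ∑ l,
          frobNorm (covDer Γ i
            (fun y => covDer Γ j (fun z => curv Γ k l z) y) x))
      ≤ p.eval (enorm x)

/-- Cylindrical: some nonzero constant vector `V` satisfies `V ⌟ F ≡ 0`. -/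
def Cylindrical (Γ : Conn n m) : Prop :=
  ∃ V : Fin n → ℝ, V ≠ 0 ∧
    ∀ (x : Fin n → ℝ) (k : Fin n), ∑ i, V i • curv Γ i k x = 0

/-- `(DB)_{ij} = ∇ᵢBⱼ − ∇ⱼBᵢ`. -/
def Dop (Γ B : Conn n m) (i j : Fin n) (x : Fin n → ℝ) :
    Matrix (Fin m) (Fin m) ℝ :=
  covDer Γ i (fun y => B y j) x - covDer Γ j (fun y => B y i) x

/-- The second variation operator
`(L_{x₀,t₀}B)ₖ = −Σᵢ∇ᵢ(DB)_{ik} + (1/(2t₀))Σᵢ(x−x₀)ᵢ(DB)_{ik} + Σᵢ[Bᵢ,F_{ik}]`. -/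
def Lop (Γ B : Conn n m) (x₀ : Fin n → ℝ) (t₀ : ℝ) (k : Fin n)
    (x : Fin n → ℝ) : Matrix (Fin m) (Fin m) ℝ :=
  (- ∑ i, covDer Γ i (fun y => Dop Γ B i k y) x)
    + (1 / (2 * t₀)) • ∑ i, (x i - x₀ i) • Dop Γ B i k x
    + ∑ i, comm (B x i) (curv Γ i k x)

/-- The Gaussian weight `G(x) = (4π)^{−n/2} e^{−|x|²/4}`. -/
def gaussG (n : ℕ) (x : Fin n → ℝ) : ℝ :=
  (4 * π) ^ (-(n : ℝ) / 2) * Real.exp (-(∑ i, x i ^ 2) / 4)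

/-- The second variation form `Q(σ,V,B)` of a `(0,1)`-soliton. -/
def Q (Γ : Conn n m) (σ : ℝ) (V : Fin n → ℝ) (B : Conn n m) : ℝ :=
  -4 * σ ^ 2 * (∫ x : Fin n → ℝ, (∑ k, frobSq (dstarF Γ k x)) * gaussG n x)
    - 2 * (∫ x : Fin n → ℝ,
        (∑ k, frobSq (∑ i, V i • curv Γ i k x)) * gaussG n x)
    + 4 * (∫ x : Fin n → ℝ,
        (∑ k, frobInner (B x k) (Lop Γ B 0 1 k x)) * gaussG n x)
    - 4 * (∫ x : Fin n → ℝ,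
        (∑ k, frobInner (B x k)
          (∑ i, (σ * x i + V i) • curv Γ i k x)) * gaussG n x)

/-- Skew-symmetric-matrix-valued 1-form. -/
def SkewVals (B : Conn n m) : Prop := ∀ x i, (B x i)ᵀ = -(B x i)

/-- `ℱ`-instability. -/
def FUnstable (Γ : Conn n m) : Prop :=
  ∃ B : Conn n m, Smooth B ∧ HasCompactSupport B ∧ SkewVals B ∧
    ∀ (σ : ℝ) (V : Fin n → ℝ), Q Γ σ V B < 0

/-- Joint smoothness (entrywise) of a one-parameter family of connections on a
time set `S`. -/
def SmoothFamilyOn (Γt : ℝ → Conn n m) (S : Set ℝ) : Prop :=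
  ∀ (k : Fin n) (a b : Fin m),
    ContDiffOn ℝ (⊤ : ℕ∞) (fun p : ℝ × (Fin n → ℝ) => Γt p.1 p.2 k a b)
      (S ×ˢ (Set.univ : Set (Fin n → ℝ)))

/-- Yang–Mills flow: `∂ₜ(Γ_t)ₖ = Σᵢ ∇ᵢ(F_t)_{ik}` on a time set `S`. -/
def YMFlowOn (Γt : ℝ → Conn n m) (S : Set ℝ) : Prop :=
  ∀ t ∈ S, ∀ (x : Fin n → ℝ) (k : Fin n) (a b : Fin m),
    HasDerivWithinAt (fun t' => Γt t' x k a b)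
      ((∑ i, covDer (Γt t) i (fun y => curv (Γt t) i k y) x) a b) S t

/-- Locally uniform in time polynomial curvature growth to order two. -/
def PolyCurvGrowth2On (Γt : ℝ → Conn n m) (S : Set ℝ) : Prop :=
  ∀ J : Set ℝ, IsCompact J → J ⊆ S →
    ∃ p : Polynomial ℝ, ∀ t ∈ J, ∀ x,
      normF (Γt t) x
        + (∑ i, ∑ j, ∑ k,
            frobNorm (covDer (Γt t) i (fun y => curv (Γt t) j k y) x))
        + (∑ i, ∑ j, ∑ k, ∑ l,
            frobNorm (covDer (Γt t) i
              (fun y => covDer (Γt t) j (fun z => curv (Γt t) k l z) y) x))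
        ≤ p.eval (enorm x)

end YM

/-!
Put `κ = 1 / (2 t₀)` and let `L` be the drift Laplacian `Δ - κ ⟨x - x₀, ∇·⟩`. Differentiating the
soliton equation and commuting covariant derivatives with the second Bianchi identity gives, for its
covariant version, `L F_jk = 2κ F_jk + 2 ∑ᵢ [F_ij, F_ik]`; hence
`L|F|² = 4κ |F|² + 4 ∑ ⟨[F_ij, F_ik], F_jk⟩ + 2 |∇F|² ≥ 4 (κ - |F|) |F|²`. The constant in the cubic
term rests on the sharp inequality `‖[A, B]‖ ≤ ‖A‖ ‖B‖` for skew-symmetric matrices. If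
`sup |F| < κ`, then `|F|²` is a bounded function with `L f ≥ c f` for some `c > 0`, and evaluating
this at the maximum of `f - ε |x - x₀|²` and letting `ε → 0` yields `f ≤ 0`.
-/

namespace YM

open scoped ContDiff

section ScalarCalculus

variable {ι : Type*} [Fintype ι] [DecidableEq ι] {f g : (ι → ℝ) → ℝ} {x : ι → ℝ}

/-- The `i`-th partial derivative `∂ᵢf` of a function on `ℝ^ι`; `pder` is its entrywise version. -/
def partialDeriv (i : ι) (f : (ι → ℝ) → ℝ) (x : ι → ℝ) : ℝ :=
  fderiv ℝ f x (Pi.single i 1)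

lemma partialDeriv_add (hf : DifferentiableAt ℝ f x) (hg : DifferentiableAt ℝ g x) (i : ι) :
    partialDeriv i (fun y => f y + g y) x = partialDeriv i f x + partialDeriv i g x := by
  simp only [partialDeriv, fderiv_fun_add hf hg, _root_.add_apply]

lemma partialDeriv_neg (i : ι) :
    partialDeriv i (fun y => -f y) x = -partialDeriv i f x := by
  simp only [partialDeriv, fderiv_fun_neg, _root_.neg_apply]

lemma partialDeriv_sub (hf : DifferentiableAt ℝ f x) (hg : DifferentiableAt ℝ g x) (i : ι) :
    partialDeriv i (fun y => f y - g y) x = partialDeriv i f x - partialDeriv i g x := by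
  simp only [partialDeriv, fderiv_fun_sub hf hg, _root_.sub_apply]

lemma partialDeriv_mul (hf : DifferentiableAt ℝ f x) (hg : DifferentiableAt ℝ g x) (i : ι) :
    partialDeriv i (fun y => f y * g y) x
      = partialDeriv i f x * g x + f x * partialDeriv i g x := by
  simp only [partialDeriv, fderiv_fun_mul hf hg, _root_.add_apply, _root_.smul_apply, smul_eq_mul]
  ring

lemma partialDeriv_const_mul (hf : DifferentiableAt ℝ f x) (c : ℝ) (i : ι) :
    partialDeriv i (fun y => c * f y) x = c * partialDeriv i f x := by
  simp only [partialDeriv, fderiv_const_mul hf, _root_.smul_apply, smul_eq_mul]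

lemma partialDeriv_sum {κ : Type*} {s : Finset κ} {f : κ → (ι → ℝ) → ℝ}
    (hf : ∀ l ∈ s, DifferentiableAt ℝ (f l) x) (i : ι) :
    partialDeriv i (fun y => ∑ l ∈ s, f l y) x = ∑ l ∈ s, partialDeriv i (f l) x := by
  simp only [partialDeriv, fderiv_fun_sum hf, _root_.sum_apply]

lemma partialDeriv_coord_sub (i l : ι) (x₀ : ι → ℝ) :
    partialDeriv i (fun y => y l - x₀ l) x = if l = i then 1 else 0 := by
  have h : HasFDerivAt (fun y : ι → ℝ => y l - x₀ l) (ContinuousLinearMap.proj l) x :=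
    (hasFDerivAt_apply (𝕜 := ℝ) l x).sub_const (x₀ l)
  rw [partialDeriv, h.fderiv, ContinuousLinearMap.proj_apply, Pi.single_apply]

lemma contDiff_partialDeriv {k l : ℕ∞ω} (hf : ContDiff ℝ k f) (hl : l + 1 ≤ k) (i : ι) :
    ContDiff ℝ l (partialDeriv i f) :=
  (hf.fderiv_right hl).clm_apply contDiff_const

lemma partialDeriv_partialDeriv_comm (hf : ContDiffAt ℝ 2 f x) (i j : ι) :
    partialDeriv i (partialDeriv j f) x = partialDeriv j (partialDeriv i f) x := by
  have hdf : DifferentiableAt ℝ (fderiv ℝ f) x :=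
    (hf.fderiv_right (m := 1) (by norm_num)).differentiableAt one_ne_zero
  have expand : ∀ k l : ι, partialDeriv k (partialDeriv l f) x
      = fderiv ℝ (fderiv ℝ f) x (Pi.single k 1) (Pi.single l 1) := fun k l => by
    unfold partialDeriv
    rw [fderiv_clm_apply hdf (differentiableAt_const _)]
    simp
  rw [expand, expand]
  exact hf.isSymmSndFDerivAt (by simp) _ _

lemma hasDerivAt_comp_add_smul_single (hf : Differentiable ℝ f) (i : ι) (x : ι → ℝ) (t : ℝ) :
    HasDerivAt (fun s : ℝ => f (x + s • Pi.single i 1))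
      (partialDeriv i f (x + t • Pi.single i 1)) t := by
  have hline : HasDerivAt (fun s : ℝ => x + s • (Pi.single i 1 : ι → ℝ)) (Pi.single i 1) t := by
    simpa using ((hasDerivAt_id t).smul_const (Pi.single i 1 : ι → ℝ)).const_add x
  exact (hf _).hasFDerivAt.comp_hasDerivAt t hline

end ScalarCalculus

section MaximumPrinciple

lemma deriv_deriv_nonpos_of_isLocalMax {h : ℝ → ℝ} {a : ℝ} (hmax : IsLocalMax h a)
    (hcont : ContinuousAt h a) : deriv (deriv h) a ≤ 0 := by
  by_contra! hpos
  have hmin : IsLocalMin h a := isLocalMin_of_deriv_deriv_pos hpos hmax.deriv_eq_zero hcont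
  have hconst : h =ᶠ[nhds a] fun _ => h a :=
    (hmax.and hmin).mono fun _ ht => le_antisymm ht.1 ht.2
  have hzero : deriv h =ᶠ[nhds a] fun _ => 0 := by simpa using hconst.deriv
  simp [hzero.deriv_eq] at hpos

variable {ι : Type*} [Fintype ι] [DecidableEq ι] {f g : (ι → ℝ) → ℝ} {x x₀ : ι → ℝ} {κ : ℝ}

lemma partialDeriv_eq_zero_of_isLocalMax (hmax : IsLocalMax f x) (i : ι) :
    partialDeriv i f x = 0 := by
  rw [partialDeriv, hmax.fderiv_eq_zero, _root_.zero_apply]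

lemma partialDeriv_partialDeriv_nonpos_of_isLocalMax (hf : ContDiff ℝ 2 f)
    (hmax : IsLocalMax f x) (i : ι) : partialDeriv i (partialDeriv i f) x ≤ 0 := by
  set h : ℝ → ℝ := fun t => f (x + t • Pi.single i 1)
  have hdiff : Differentiable ℝ f := hf.differentiable two_ne_zero
  have hdiff' : Differentiable ℝ (partialDeriv i f) :=
    (contDiff_partialDeriv hf (l := 1) (by norm_num) i).differentiable one_ne_zero
  have hderiv : deriv h = fun t => partialDeriv i f (x + t • Pi.single i 1) :=
    funext fun t => (hasDerivAt_comp_add_smul_single hdiff i x t).deriv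
  have hderiv2 : deriv (deriv h) 0 = partialDeriv i (partialDeriv i f) x := by
    rw [hderiv, (hasDerivAt_comp_add_smul_single hdiff' i x 0).deriv, zero_smul, add_zero]
  have hline : Continuous fun t : ℝ => x + t • (Pi.single i 1 : ι → ℝ) := by fun_prop
  have hmax_line : IsLocalMax h 0 := by
    refine IsLocalMax.comp_continuous (f := f) (g := fun t : ℝ => x + t • Pi.single i 1) ?_
      hline.continuousAt
    simpa using hmax
  exact hderiv2 ▸ deriv_deriv_nonpos_of_isLocalMax hmax_line
    (hf.continuous.comp hline).continuousAt

/-- The drift Laplacian `Δf - κ ⟨x - x₀, ∇f⟩`, the natural operator on `L²` of the Gaussian weight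
`exp (-κ |x - x₀|² / 2)`. -/
def driftLaplacian (κ : ℝ) (x₀ : ι → ℝ) (f : (ι → ℝ) → ℝ) (x : ι → ℝ) : ℝ :=
  ∑ i, (partialDeriv i (partialDeriv i f) x - κ * (x i - x₀ i) * partialDeriv i f x)

lemma driftLaplacian_sub (hf : ContDiff ℝ 2 f) (hg : ContDiff ℝ 2 g) :
    driftLaplacian κ x₀ (fun y => f y - g y) x
      = driftLaplacian κ x₀ f x - driftLaplacian κ x₀ g x := by
  have hf' : Differentiable ℝ f := hf.differentiable two_ne_zero
  have hg' : Differentiable ℝ g := hg.differentiable two_ne_zero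
  have hdf : ∀ i, Differentiable ℝ (partialDeriv i f) := fun i =>
    (contDiff_partialDeriv hf (l := 1) (by norm_num) i).differentiable one_ne_zero
  have hdg : ∀ i, Differentiable ℝ (partialDeriv i g) := fun i =>
    (contDiff_partialDeriv hg (l := 1) (by norm_num) i).differentiable one_ne_zero
  have grad_sub : ∀ i, partialDeriv i (fun y => f y - g y)
      = fun y => partialDeriv i f y - partialDeriv i g y :=
    fun i => funext fun y => partialDeriv_sub (hf' y) (hg' y) i
  simp only [driftLaplacian, grad_sub, partialDeriv_sub (hdf _ x) (hdg _ x),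
    ← Finset.sum_sub_distrib]
  exact Finset.sum_congr rfl fun i _ => by ring

lemma driftLaplacian_const_mul (hf : ContDiff ℝ 2 f) (c : ℝ) :
    driftLaplacian κ x₀ (fun y => c * f y) x = c * driftLaplacian κ x₀ f x := by
  have hf' : Differentiable ℝ f := hf.differentiable two_ne_zero
  have hdf : ∀ i, Differentiable ℝ (partialDeriv i f) := fun i =>
    (contDiff_partialDeriv hf (l := 1) (by norm_num) i).differentiable one_ne_zero
  have grad_const_mul : ∀ i, partialDeriv i (fun y => c * f y) = fun y => c * partialDeriv i f y :=
    fun i => funext fun y => partialDeriv_const_mul (hf' y) c i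
  simp only [driftLaplacian, grad_const_mul, partialDeriv_const_mul (hdf _ x), Finset.mul_sum]
  exact Finset.sum_congr rfl fun i _ => by ring

lemma driftLaplacian_sum {σ : Type*} {s : Finset σ} {f : σ → (ι → ℝ) → ℝ}
    (hf : ∀ l ∈ s, ContDiff ℝ 2 (f l)) :
    driftLaplacian κ x₀ (fun y => ∑ l ∈ s, f l y) x = ∑ l ∈ s, driftLaplacian κ x₀ (f l) x := by
  have hf' : ∀ l ∈ s, Differentiable ℝ (f l) := fun l hl => (hf l hl).differentiable two_ne_zero
  have hdf : ∀ i, ∀ l ∈ s, Differentiable ℝ (partialDeriv i (f l)) := fun i l hl =>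
    (contDiff_partialDeriv (hf l hl) (l := 1) (by norm_num) i).differentiable one_ne_zero
  have grad_sum : ∀ i, partialDeriv i (fun y => ∑ l ∈ s, f l y)
      = fun y => ∑ l ∈ s, partialDeriv i (f l) y :=
    fun i => funext fun y => partialDeriv_sum (fun l hl => hf' l hl y) i
  simp only [driftLaplacian, grad_sum, partialDeriv_sum fun l hl => hdf _ l hl x, Finset.mul_sum,
    ← Finset.sum_sub_distrib]
  exact Finset.sum_comm

omit [DecidableEq ι] in
lemma contDiff_sum_sq_sub {k : ℕ∞ω} (x₀ : ι → ℝ) :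
    ContDiff ℝ k fun y : ι → ℝ => ∑ l, (y l - x₀ l) ^ 2 :=
  ContDiff.sum fun l _ => ((contDiff_apply ℝ ℝ l).sub contDiff_const).pow 2

lemma partialDeriv_sum_sq_sub (i : ι) (x₀ x : ι → ℝ) :
    partialDeriv i (fun y => ∑ l, (y l - x₀ l) ^ 2) x = 2 * (x i - x₀ i) := by
  have hcoord : ∀ l, DifferentiableAt ℝ (fun y : ι → ℝ => y l - x₀ l) x := fun l => by fun_prop
  simp only [sq]
  rw [partialDeriv_sum fun l _ => (hcoord l).fun_mul (hcoord l)]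
  simp only [partialDeriv_mul (hcoord _) (hcoord _), partialDeriv_coord_sub, ite_mul, mul_ite,
    one_mul, mul_one, zero_mul, mul_zero, Finset.sum_add_distrib, Finset.sum_ite_eq',
    Finset.mem_univ, if_true]
  ring

lemma driftLaplacian_sum_sq_sub (κ : ℝ) (x₀ x : ι → ℝ) :
    driftLaplacian κ x₀ (fun y => ∑ l, (y l - x₀ l) ^ 2) x
      = 2 * Fintype.card ι - 2 * κ * ∑ l, (x l - x₀ l) ^ 2 := by
  have hcoord : ∀ l, DifferentiableAt ℝ (fun y : ι → ℝ => y l - x₀ l) x := fun l => by fun_prop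
  have grad : ∀ i, partialDeriv i (fun y : ι → ℝ => ∑ l, (y l - x₀ l) ^ 2)
      = fun y => 2 * (y i - x₀ i) := fun i => funext (partialDeriv_sum_sq_sub i x₀)
  simp only [driftLaplacian, grad, partialDeriv_const_mul (hcoord _), partialDeriv_coord_sub,
    if_true, Finset.sum_sub_distrib, Finset.sum_const, Finset.card_univ, nsmul_eq_mul,
    Finset.mul_sum]
  congr 1
  · ring
  · exact Finset.sum_congr rfl fun i _ => by ring

lemma driftLaplacian_nonpos_of_isLocalMax (hf : ContDiff ℝ 2 f) (hmax : IsLocalMax f x) :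
    driftLaplacian κ x₀ f x ≤ 0 :=
  Finset.sum_nonpos fun i _ => by
    rw [partialDeriv_eq_zero_of_isLocalMax hmax, mul_zero, sub_zero]
    exact partialDeriv_partialDeriv_nonpos_of_isLocalMax hf hmax i

omit [DecidableEq ι] in
lemma tendsto_sum_sq_sub_cocompact (x₀ : ι → ℝ) :
    Tendsto (fun y : ι → ℝ => ∑ l, (y l - x₀ l) ^ 2) (cocompact (ι → ℝ)) atTop := by
  have hdist : Tendsto (fun y : ι → ℝ => dist y x₀ ^ 2) (cocompact (ι → ℝ)) atTop :=
    (tendsto_pow_atTop two_ne_zero).comp (tendsto_dist_right_cocompact_atTop x₀)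
  refine tendsto_atTop_mono (fun y => ?_) hdist
  have hle : dist y x₀ ≤ √(∑ l, (y l - x₀ l) ^ 2) :=
    (dist_pi_le_iff (Real.sqrt_nonneg _)).2 fun l => Real.le_sqrt_of_sq_le <| by
      rw [Real.dist_eq, sq_abs]
      exact Finset.single_le_sum (f := fun l => (y l - x₀ l) ^ 2) (fun _ _ => sq_nonneg _)
        (Finset.mem_univ l)
  exact (Real.le_sqrt dist_nonneg (Finset.sum_nonneg fun _ _ => sq_nonneg _)).1 hle

lemma exists_driftLaplacian_le_of_bddAbove (hκ : 0 ≤ κ) (hf : ContDiff ℝ 2 f)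
    (hbdd : BddAbove (Set.range f)) (x₀ y : ι → ℝ) {ε : ℝ} (hε : 0 < ε) :
    ∃ x, f y ≤ f x + ε * ∑ l, (y l - x₀ l) ^ 2 ∧
      driftLaplacian κ x₀ f x ≤ ε * (2 * Fintype.card ι) := by
  set q : (ι → ℝ) → ℝ := fun y => ∑ l, (y l - x₀ l) ^ 2
  have hq : ContDiff ℝ 2 q := contDiff_sum_sq_sub x₀
  have hq_nonneg : ∀ x, 0 ≤ q x := fun x => Finset.sum_nonneg fun _ _ => sq_nonneg _
  have hpen : ContDiff ℝ 2 fun x => f x - ε * q x := hf.sub (contDiff_const.mul hq)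
  obtain ⟨C, hC⟩ := hbdd
  have hlim : Tendsto (fun x => f x - ε * q x) (cocompact (ι → ℝ)) atBot :=
    tendsto_atBot_add_left_of_ge _ C (fun x => hC ⟨x, rfl⟩) <| tendsto_neg_atTop_atBot.comp <|
      (tendsto_sum_sq_sub_cocompact x₀).const_mul_atTop hε
  obtain ⟨x, hx⟩ := hpen.continuous.exists_forall_ge hlim
  refine ⟨x, by linarith [hx y, mul_nonneg hε.le (hq_nonneg x)], ?_⟩
  have hL : driftLaplacian κ x₀ (fun x => f x - ε * q x) x ≤ 0 :=
    driftLaplacian_nonpos_of_isLocalMax hpen (Eventually.of_forall hx)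
  rw [driftLaplacian_sub hf (contDiff_const.mul hq), driftLaplacian_const_mul hq,
    driftLaplacian_sum_sq_sub] at hL
  have : 0 ≤ ε * (2 * κ * q x) := mul_nonneg hε.le (mul_nonneg (by positivity) (hq_nonneg x))
  linarith

theorem nonpos_of_mul_le_driftLaplacian {c : ℝ} (hc : 0 < c) (hκ : 0 ≤ κ) (hf : ContDiff ℝ 2 f)
    (hbdd : BddAbove (Set.range f)) (hsub : ∀ x, c * f x ≤ driftLaplacian κ x₀ f x)
    (y : ι → ℝ) : f y ≤ 0 := by
  set K : ℝ := 2 * Fintype.card ι / c + ∑ l, (y l - x₀ l) ^ 2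
  have hle : ∀ ε : ℝ, 0 < ε → f y ≤ ε * K := fun ε hε => by
    obtain ⟨x, hyx, hLx⟩ := exists_driftLaplacian_le_of_bddAbove hκ hf hbdd x₀ y hε
    have hfx : f x ≤ ε * (2 * Fintype.card ι) / c :=
      (le_div_iff₀' hc).2 ((hsub x).trans hLx)
    calc f y ≤ f x + ε * ∑ l, (y l - x₀ l) ^ 2 := hyx
      _ ≤ ε * (2 * Fintype.card ι) / c + ε * ∑ l, (y l - x₀ l) ^ 2 := by gcongr
      _ = ε * K := by ring
  have hlim : Tendsto (fun ε : ℝ => ε * K) (nhdsWithin 0 (Set.Ioi 0)) (nhds 0) := by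
    have hcont : Continuous fun ε : ℝ => ε * K := by fun_prop
    simpa using (hcont.tendsto 0).mono_left nhdsWithin_le_nhds
  exact ge_of_tendsto hlim (eventually_mem_nhdsWithin.mono hle)

end MaximumPrinciple

section FrobeniusProduct

variable {m : ℕ} {A G : Matrix (Fin m) (Fin m) ℝ}

lemma frobInner_eq_trace (A B : Matrix (Fin m) (Fin m) ℝ) :
    frobInner A B = trace (A * Bᵀ) :=
  Matrix.sum_hadamard_eq A B

lemma frobInner_add_left (A B C : Matrix (Fin m) (Fin m) ℝ) :
    frobInner (A + B) C = frobInner A C + frobInner B C := by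
  simp only [frobInner_eq_trace, add_mul, trace_add]

lemma frobInner_sub_left (A B C : Matrix (Fin m) (Fin m) ℝ) :
    frobInner (A - B) C = frobInner A C - frobInner B C := by
  simp only [frobInner_eq_trace, sub_mul, trace_sub]

lemma frobInner_smul_left (c : ℝ) (A B : Matrix (Fin m) (Fin m) ℝ) :
    frobInner (c • A) B = c * frobInner A B := by
  simp only [frobInner_eq_trace, smul_mul_assoc, trace_smul, smul_eq_mul]

lemma frobInner_sum_left {ι : Type*} (s : Finset ι) (A : ι → Matrix (Fin m) (Fin m) ℝ)
    (B : Matrix (Fin m) (Fin m) ℝ) :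
    frobInner (∑ l ∈ s, A l) B = ∑ l ∈ s, frobInner (A l) B := by
  simp only [frobInner_eq_trace, Finset.sum_mul, trace_sum]

lemma frobInner_symm (A B : Matrix (Fin m) (Fin m) ℝ) : frobInner A B = frobInner B A := by
  simp only [frobInner, mul_comm]

lemma frobInner_self (A : Matrix (Fin m) (Fin m) ℝ) : frobInner A A = frobSq A := by
  simp only [frobInner, frobSq, sq]

lemma frobSq_nonneg (A : Matrix (Fin m) (Fin m) ℝ) : 0 ≤ frobSq A :=
  Finset.sum_nonneg fun _ _ => Finset.sum_nonneg fun _ _ => sq_nonneg _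

lemma frobSq_eq_zero_iff : frobSq A = 0 ↔ A = 0 := by
  rw [← frobInner_self, frobInner_eq_trace, ← conjTranspose_eq_transpose_of_trivial,
    trace_mul_conjTranspose_self_eq_zero_iff]

lemma frobNorm_sq (A : Matrix (Fin m) (Fin m) ℝ) : frobNorm A ^ 2 = frobSq A :=
  Real.sq_sqrt (frobSq_nonneg A)

lemma frobNorm_nonneg (A : Matrix (Fin m) (Fin m) ℝ) : 0 ≤ frobNorm A :=
  Real.sqrt_nonneg _

lemma abs_frobInner_le (A B : Matrix (Fin m) (Fin m) ℝ) :
    |frobInner A B| ≤ frobNorm A * frobNorm B := by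
  refine abs_le_of_sq_le_sq ?_ (mul_nonneg (frobNorm_nonneg A) (frobNorm_nonneg B))
  have h := Finset.sum_mul_sq_le_sq_mul_sq Finset.univ (fun p : Fin m × Fin m => A p.1 p.2)
    (fun p => B p.1 p.2)
  simpa only [Fintype.sum_prod_type, mul_pow, frobNorm_sq, frobInner, frobSq] using h

open scoped Matrix.Norms.Frobenius in
lemma frobNorm_eq_norm (A : Matrix (Fin m) (Fin m) ℝ) : frobNorm A = ‖A‖ := by
  simp only [frobNorm, frobSq, frobenius_norm_def, Real.sqrt_eq_rpow, Real.rpow_two,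
    Real.norm_eq_abs, sq_abs]

open scoped Matrix.Norms.Frobenius in
lemma frobNorm_transpose_mul_self_le (A : Matrix (Fin m) (Fin m) ℝ) :
    frobNorm (Aᵀ * A) ≤ frobNorm A ^ 2 := by
  simp only [frobNorm_eq_norm]
  calc ‖Aᵀ * A‖ ≤ ‖Aᵀ‖ * ‖A‖ := frobenius_norm_mul _ _
    _ = ‖A‖ ^ 2 := by rw [frobenius_norm_transpose, sq]

lemma frobInner_comm_add_frobInner_comm (hG : Gᵀ = -G) (X Y : Matrix (Fin m) (Fin m) ℝ) :
    frobInner (comm G X) Y + frobInner X (comm G Y) = 0 := by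
  have hcycle : trace (G * (X * Yᵀ)) = trace (X * (Yᵀ * G)) := by
    rw [trace_mul_comm, mul_assoc]
  simp only [frobInner_eq_trace, comm, transpose_sub, transpose_mul, hG, sub_mul, mul_sub,
    mul_neg, neg_mul, trace_sub, trace_neg, mul_assoc, hcycle]
  ring

end FrobeniusProduct

section SkewCommutator

variable {m : ℕ} {A B : Matrix (Fin m) (Fin m) ℝ}

lemma apply_eq_neg_of_transpose_eq_neg (hA : Aᵀ = -A) (a b : Fin m) : A a b = -A b a :=
  congrFun (congrFun hA b) a

lemma transpose_comm_eq_neg (hA : Aᵀ = -A) (hB : Bᵀ = -B) : (comm A B)ᵀ = -comm A B := by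
  simp only [comm, transpose_sub, transpose_mul, hA, hB, neg_mul_neg, neg_sub]

lemma frobSq_comm_eq_trace (hA : Aᵀ = -A) (hB : Bᵀ = -B) :
    frobSq (comm A B) = 2 * trace (A * A * (B * B)) - 2 * trace (A * B * (A * B)) := by
  have hABBA : trace (A * (B * (B * A))) = trace (A * (A * (B * B))) := by
    rw [← mul_assoc B B A, ← mul_assoc, trace_mul_comm]
  have hBAAB : trace (B * (A * (A * B))) = trace (A * (A * (B * B))) := by
    rw [trace_mul_comm]
    simp only [mul_assoc]
  have hBABA : trace (B * (A * (B * A))) = trace (A * (B * (A * B))) := by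
    rw [trace_mul_comm]
    simp only [mul_assoc]
  rw [← frobInner_self, frobInner_eq_trace, transpose_comm_eq_neg hA hB]
  simp only [comm, mul_neg, mul_sub, sub_mul, trace_neg, trace_sub, mul_assoc, hABBA, hBAAB, hBABA]
  ring

/-- The coefficients of the 4-form `½ A ∧ A`, where `A` is read as the 2-form
`½ ∑ A a b eᵃ ∧ eᵇ`. -/
def wedgeSelf (A : Matrix (Fin m) (Fin m) ℝ) (a b c d : Fin m) : ℝ :=
  A a b * A c d - A a c * A b d + A a d * A b c

lemma wedgeSelf_swap_mid (hA : Aᵀ = -A) (a b c d : Fin m) :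
    wedgeSelf A a c b d = -wedgeSelf A a b c d := by
  simp only [wedgeSelf, apply_eq_neg_of_transpose_eq_neg hA c b]
  ring

lemma wedgeSelf_rotate (hA : Aᵀ = -A) (a b c d : Fin m) :
    wedgeSelf A a c d b = wedgeSelf A a b c d := by
  simp only [wedgeSelf, apply_eq_neg_of_transpose_eq_neg hA c b,
    apply_eq_neg_of_transpose_eq_neg hA d b]
  ring

lemma sum_mul_mul_mul_eq_trace (A B : Matrix (Fin m) (Fin m) ℝ) :
    ∑ a, ∑ b, ∑ c, ∑ d, A a b * B b c * (A c d * B d a) = trace (A * B * (A * B)) := by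
  simp only [trace, diag_apply, mul_apply, Finset.sum_mul_sum]
  exact Finset.sum_congr rfl fun a _ => Finset.sum_comm

lemma sum_mul_mul_wedgeSelf (hA : Aᵀ = -A) (hB : Bᵀ = -B) :
    ∑ a, ∑ b, ∑ c, ∑ d, A a b * A c d * wedgeSelf B a b c d
      = frobInner A B ^ 2 - 2 * trace (A * B * (A * B)) := by
  have hsq : frobInner A B ^ 2
      = ∑ a, ∑ b, ∑ c, ∑ d, A a b * A c d * (B a b * B c d) := by
    simp only [frobInner, sq, Finset.sum_mul, Finset.mul_sum]
    exact Finset.sum_congr rfl fun a _ => Finset.sum_congr rfl fun b _ =>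
      Finset.sum_congr rfl fun c _ => Finset.sum_congr rfl fun d _ => by ring
  have hac : ∑ a, ∑ b, ∑ c, ∑ d, A a b * A c d * (B a c * B b d)
      = trace (A * B * (A * B)) := by
    rw [← sum_mul_mul_mul_eq_trace]
    refine Finset.sum_congr rfl fun a _ => Finset.sum_congr rfl fun b _ => ?_
    rw [Finset.sum_comm]
    refine Finset.sum_congr rfl fun c _ => Finset.sum_congr rfl fun d _ => ?_
    rw [apply_eq_neg_of_transpose_eq_neg hA d c, apply_eq_neg_of_transpose_eq_neg hB a d]
    ring
  have had : ∑ a, ∑ b, ∑ c, ∑ d, A a b * A c d * (B a d * B b c)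
      = -trace (A * B * (A * B)) := by
    simp only [← sum_mul_mul_mul_eq_trace, ← Finset.sum_neg_distrib]
    refine Finset.sum_congr rfl fun a _ => Finset.sum_congr rfl fun b _ =>
      Finset.sum_congr rfl fun c _ => Finset.sum_congr rfl fun d _ => ?_
    rw [apply_eq_neg_of_transpose_eq_neg hB a d]
    ring
  simp only [wedgeSelf, mul_add, mul_sub, Finset.sum_add_distrib, Finset.sum_sub_distrib, hsq,
    hac, had]
  ring

lemma sum_wedgeSelf_mul_wedgeSelf (hA : Aᵀ = -A) (hB : Bᵀ = -B) :
    ∑ a, ∑ b, ∑ c, ∑ d, wedgeSelf A a b c d * wedgeSelf B a b c d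
      = 3 * (frobInner A B ^ 2 - 2 * trace (A * B * (A * B))) := by
  have hac : ∑ a, ∑ b, ∑ c, ∑ d, A a c * A b d * wedgeSelf B a b c d
      = -∑ a, ∑ b, ∑ c, ∑ d, A a b * A c d * wedgeSelf B a b c d := by
    simp only [← Finset.sum_neg_distrib]
    refine Finset.sum_congr rfl fun a _ => ?_
    rw [Finset.sum_comm]
    exact Finset.sum_congr rfl fun b _ => Finset.sum_congr rfl fun c _ =>
      Finset.sum_congr rfl fun d _ => by rw [wedgeSelf_swap_mid hB, mul_neg]
  have had : ∑ a, ∑ b, ∑ c, ∑ d, A a d * A b c * wedgeSelf B a b c d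
      = ∑ a, ∑ b, ∑ c, ∑ d, A a b * A c d * wedgeSelf B a b c d := by
    refine Finset.sum_congr rfl fun a _ => ?_
    calc ∑ b, ∑ c, ∑ d, A a d * A b c * wedgeSelf B a b c d
        = ∑ b, ∑ d, ∑ c, A a d * A b c * wedgeSelf B a b c d :=
          Finset.sum_congr rfl fun _ _ => Finset.sum_comm
      _ = ∑ d, ∑ b, ∑ c, A a d * A b c * wedgeSelf B a b c d := Finset.sum_comm
      _ = ∑ b, ∑ c, ∑ d, A a b * A c d * wedgeSelf B a b c d :=
          Finset.sum_congr rfl fun b _ => Finset.sum_congr rfl fun c _ =>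
            Finset.sum_congr rfl fun d _ => by rw [wedgeSelf_rotate hB]
  have hexpand : ∀ a b c d, wedgeSelf A a b c d * wedgeSelf B a b c d
      = A a b * A c d * wedgeSelf B a b c d - A a c * A b d * wedgeSelf B a b c d
        + A a d * A b c * wedgeSelf B a b c d := fun a b c d => by
    rw [wedgeSelf, add_mul, sub_mul]
  simp only [hexpand, Finset.sum_add_distrib, Finset.sum_sub_distrib, hac, had,
    sum_mul_mul_wedgeSelf hA hB]
  ring

/-- The quadratic map `A ↦ (√2 A², wedgeSelf A / √3)`, listed entrywise. On skew-symmetric matrices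
this scaling makes the images of `A` and `B` pair to `‖[A, B]‖² + ⟨A, B⟩²`, so that Cauchy–Schwarz
bounds the commutator. -/
def skewSquare (A : Matrix (Fin m) (Fin m) ℝ) :
    (Fin m × Fin m) ⊕ (Fin m × Fin m × Fin m × Fin m) → ℝ :=
  Sum.elim (fun p => √2 * (A * A) p.1 p.2)
    (fun p => wedgeSelf A p.1 p.2.1 p.2.2.1 p.2.2.2 / √3)

lemma sum_skewSquare_mul_skewSquare (hA : Aᵀ = -A) (hB : Bᵀ = -B) :
    ∑ p, skewSquare A p * skewSquare B p = frobSq (comm A B) + frobInner A B ^ 2 := by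
  have hsq : ∑ p : Fin m × Fin m, √2 * (A * A) p.1 p.2 * (√2 * (B * B) p.1 p.2)
      = 2 * trace (A * A * (B * B)) := by
    have htranspose : (B * B)ᵀ = B * B := by rw [transpose_mul, hB, neg_mul_neg]
    have htrace : trace (A * A * (B * B)) = frobInner (A * A) (B * B) := by
      rw [frobInner_eq_trace, htranspose]
    simp only [htrace, frobInner, Fintype.sum_prod_type, Finset.mul_sum]
    exact Finset.sum_congr rfl fun a _ => Finset.sum_congr rfl fun b _ => by
      rw [mul_mul_mul_comm, Real.mul_self_sqrt zero_le_two]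
  have hwedge : ∀ p : Fin m × Fin m × Fin m × Fin m,
      wedgeSelf A p.1 p.2.1 p.2.2.1 p.2.2.2 / √3 * (wedgeSelf B p.1 p.2.1 p.2.2.1 p.2.2.2 / √3)
        = wedgeSelf A p.1 p.2.1 p.2.2.1 p.2.2.2 * wedgeSelf B p.1 p.2.1 p.2.2.1 p.2.2.2 / 3 :=
    fun p => by rw [div_mul_div_comm, Real.mul_self_sqrt zero_le_three]
  simp only [skewSquare, Fintype.sum_sum_type, Sum.elim_inl, Sum.elim_inr, hsq, hwedge,
    ← Finset.sum_div, frobSq_comm_eq_trace hA hB]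
  simp only [Fintype.sum_prod_type, sum_wedgeSelf_mul_wedgeSelf hA hB]
  ring

lemma sum_skewSquare_sq (hA : Aᵀ = -A) : ∑ p, skewSquare A p ^ 2 = frobSq A ^ 2 := by
  have hcomm : frobSq (comm A A) = 0 := frobSq_eq_zero_iff.2 (sub_self _)
  simp only [sq (skewSquare A _), sum_skewSquare_mul_skewSquare hA hA, hcomm, zero_add,
    frobInner_self]

theorem frobNorm_comm_le (hA : Aᵀ = -A) (hB : Bᵀ = -B) :
    frobNorm (comm A B) ≤ frobNorm A * frobNorm B := by
  have hcs := Finset.sum_mul_sq_le_sq_mul_sq Finset.univ (skewSquare A) (skewSquare B)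
  rw [sum_skewSquare_mul_skewSquare hA hB, sum_skewSquare_sq hA, sum_skewSquare_sq hB,
    ← mul_pow] at hcs
  have hle : frobSq (comm A B) ≤ frobSq A * frobSq B :=
    calc frobSq (comm A B) ≤ frobSq (comm A B) + frobInner A B ^ 2 :=
          le_add_of_nonneg_right (sq_nonneg _)
      _ ≤ frobSq A * frobSq B :=
          le_of_sq_le_sq hcs (mul_nonneg (frobSq_nonneg A) (frobSq_nonneg B))
  calc frobNorm (comm A B) ≤ √(frobSq A * frobSq B) := Real.sqrt_le_sqrt hle
    _ = frobNorm A * frobNorm B := Real.sqrt_mul (frobSq_nonneg A) _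

lemma abs_frobInner_comm_le (hA : Aᵀ = -A) (hB : Bᵀ = -B) (C : Matrix (Fin m) (Fin m) ℝ) :
    |frobInner (comm A B) C| ≤ frobNorm A * frobNorm B * frobNorm C :=
  (abs_frobInner_le _ _).trans <|
    mul_le_mul_of_nonneg_right (frobNorm_comm_le hA hB) (frobNorm_nonneg C)

lemma abs_sum_frobInner_comm_le {n : ℕ} {F : Fin n → Fin n → Matrix (Fin m) (Fin m) ℝ}
    (hF : ∀ i j, (F i j)ᵀ = -F i j) :
    |∑ j, ∑ k, ∑ i, frobInner (comm (F i j) (F i k)) (F j k)|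
      ≤ √(∑ i, ∑ j, frobSq (F i j)) ^ 3 := by
  set N : Matrix (Fin n) (Fin n) ℝ := Matrix.of fun i j => frobNorm (F i j)
  have hsq : frobSq N = ∑ i, ∑ j, frobSq (F i j) :=
    Finset.sum_congr rfl fun i _ => Finset.sum_congr rfl fun j _ => frobNorm_sq (F i j)
  have hN : frobNorm N = √(∑ i, ∑ j, frobSq (F i j)) := by
    rw [frobNorm, hsq]
  have hle : |∑ j, ∑ k, ∑ i, frobInner (comm (F i j) (F i k)) (F j k)|
      ≤ ∑ j, ∑ k, ∑ i, N i j * N i k * N j k :=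
    (Finset.abs_sum_le_sum_abs _ _).trans <| Finset.sum_le_sum fun j _ =>
      (Finset.abs_sum_le_sum_abs _ _).trans <| Finset.sum_le_sum fun k _ =>
        (Finset.abs_sum_le_sum_abs _ _).trans <| Finset.sum_le_sum fun i _ =>
          abs_frobInner_comm_le (hF i j) (hF i k) (F j k)
  calc |∑ j, ∑ k, ∑ i, frobInner (comm (F i j) (F i k)) (F j k)|
      ≤ ∑ j, ∑ k, ∑ i, N i j * N i k * N j k := hle
    _ = frobInner (Nᵀ * N) N := by
        simp only [frobInner, mul_apply, transpose_apply, Finset.sum_mul]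
    _ ≤ frobNorm (Nᵀ * N) * frobNorm N := le_of_abs_le (abs_frobInner_le _ _)
    _ ≤ frobNorm N ^ 2 * frobNorm N :=
        mul_le_mul_of_nonneg_right (frobNorm_transpose_mul_self_le N) (frobNorm_nonneg N)
    _ = √(∑ i, ∑ j, frobSq (F i j)) ^ 3 := by rw [hN, ← pow_succ]

end SkewCommutator

section MatrixCalculus

variable {n m : ℕ} {A B : (Fin n → ℝ) → Matrix (Fin m) (Fin m) ℝ} {φ : (Fin n → ℝ) → ℝ}

lemma SmoothMat.differentiableAt (hA : SmoothMat A) (a b : Fin m) (x : Fin n → ℝ) :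
    DifferentiableAt ℝ (fun y => A y a b) x :=
  (hA a b).differentiable (by simp) x

lemma SmoothMat.add (hA : SmoothMat A) (hB : SmoothMat B) : SmoothMat fun x => A x + B x :=
  fun a b => (hA a b).add (hB a b)

lemma SmoothMat.sub (hA : SmoothMat A) (hB : SmoothMat B) : SmoothMat fun x => A x - B x :=
  fun a b => (hA a b).sub (hB a b)

lemma SmoothMat.smul (hφ : ContDiff ℝ (⊤ : ℕ∞) φ) (hA : SmoothMat A) :
    SmoothMat fun x => φ x • A x :=
  fun a b => hφ.mul (hA a b)

lemma SmoothMat.mul (hA : SmoothMat A) (hB : SmoothMat B) : SmoothMat fun x => A x * B x :=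
  fun a b => by
    simpa only [Matrix.mul_apply] using ContDiff.sum fun c _ => (hA a c).mul (hB c b)

lemma SmoothMat.comm (hA : SmoothMat A) (hB : SmoothMat B) : SmoothMat fun x => comm (A x) (B x) :=
  (hA.mul hB).sub (hB.mul hA)

lemma SmoothMat.pder (hA : SmoothMat A) (i : Fin n) : SmoothMat (pder i A) :=
  fun a b => contDiff_partialDeriv (hA a b) (by simp) i

lemma SmoothMat.contDiff_frobInner (hA : SmoothMat A) (hB : SmoothMat B) :
    ContDiff ℝ (⊤ : ℕ∞) fun x => frobInner (A x) (B x) :=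
  ContDiff.sum fun a _ => ContDiff.sum fun b _ => (hA a b).mul (hB a b)

lemma pder_apply (i : Fin n) (A : (Fin n → ℝ) → Matrix (Fin m) (Fin m) ℝ) (x : Fin n → ℝ)
    (a b : Fin m) : pder i A x a b = partialDeriv i (fun y => A y a b) x :=
  rfl

lemma pder_add (hA : SmoothMat A) (hB : SmoothMat B) (i : Fin n) (x : Fin n → ℝ) :
    pder i (fun y => A y + B y) x = pder i A x + pder i B x := by
  ext a b
  exact partialDeriv_add (hA.differentiableAt a b x) (hB.differentiableAt a b x) i

lemma pder_neg (i : Fin n) (A : (Fin n → ℝ) → Matrix (Fin m) (Fin m) ℝ) (x : Fin n → ℝ) :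
    pder i (fun y => -A y) x = -pder i A x := by
  ext a b
  exact partialDeriv_neg i

lemma pder_sub (hA : SmoothMat A) (hB : SmoothMat B) (i : Fin n) (x : Fin n → ℝ) :
    pder i (fun y => A y - B y) x = pder i A x - pder i B x := by
  ext a b
  exact partialDeriv_sub (hA.differentiableAt a b x) (hB.differentiableAt a b x) i

lemma pder_sum {ι : Type*} {s : Finset ι} {A : ι → (Fin n → ℝ) → Matrix (Fin m) (Fin m) ℝ}
    (hA : ∀ l ∈ s, SmoothMat (A l)) (i : Fin n) (x : Fin n → ℝ) :
    pder i (fun y => ∑ l ∈ s, A l y) x = ∑ l ∈ s, pder i (A l) x := by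
  ext a b
  simp only [pder_apply, Matrix.sum_apply]
  exact partialDeriv_sum (fun l hl => (hA l hl).differentiableAt a b x) i

lemma pder_smul (hφ : DifferentiableAt ℝ φ x) (hA : SmoothMat A) (i : Fin n) :
    pder i (fun y => φ y • A y) x = partialDeriv i φ x • A x + φ x • pder i A x := by
  ext a b
  exact partialDeriv_mul hφ (hA.differentiableAt a b x) i

lemma pder_mul (hA : SmoothMat A) (hB : SmoothMat B) (i : Fin n) (x : Fin n → ℝ) :
    pder i (fun y => A y * B y) x = pder i A x * B x + A x * pder i B x := by
  ext a b
  simp only [pder_apply, Matrix.add_apply, Matrix.mul_apply]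
  rw [partialDeriv_sum fun c _ => (hA.differentiableAt a c x).fun_mul (hB.differentiableAt c b x),
    ← Finset.sum_add_distrib]
  exact Finset.sum_congr rfl fun c _ =>
    partialDeriv_mul (hA.differentiableAt a c x) (hB.differentiableAt c b x) i

lemma pder_comm (hA : SmoothMat A) (hB : SmoothMat B) (i : Fin n) (x : Fin n → ℝ) :
    pder i (fun y => comm (A y) (B y)) x = comm (pder i A x) (B x) + comm (A x) (pder i B x) := by
  simp only [comm, pder_sub (hA.mul hB) (hB.mul hA), pder_mul hA hB, pder_mul hB hA]
  abel

lemma pder_pder_comm (hA : SmoothMat A) (i j : Fin n) (x : Fin n → ℝ) :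
    pder i (pder j A) x = pder j (pder i A) x := by
  ext a b
  exact partialDeriv_partialDeriv_comm (contDiff_infty.1 (hA a b) 2).contDiffAt i j

lemma pder_transpose (i : Fin n) (A : (Fin n → ℝ) → Matrix (Fin m) (Fin m) ℝ) (x : Fin n → ℝ) :
    pder i (fun y => (A y)ᵀ) x = (pder i A x)ᵀ :=
  rfl

lemma partialDeriv_frobInner (hA : SmoothMat A) (hB : SmoothMat B) (i : Fin n) (x : Fin n → ℝ) :
    partialDeriv i (fun y => frobInner (A y) (B y)) x
      = frobInner (pder i A x) (B x) + frobInner (A x) (pder i B x) := by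
  have hentry : ∀ a b, DifferentiableAt ℝ (fun y => A y a b * B y a b) x := fun a b =>
    (hA.differentiableAt a b x).fun_mul (hB.differentiableAt a b x)
  simp only [frobInner, ← Finset.sum_add_distrib]
  rw [partialDeriv_sum fun a _ => DifferentiableAt.fun_sum fun b _ => hentry a b]
  refine Finset.sum_congr rfl fun a _ => ?_
  rw [partialDeriv_sum fun b _ => hentry a b]
  exact Finset.sum_congr rfl fun b _ =>
    partialDeriv_mul (hA.differentiableAt a b x) (hB.differentiableAt a b x) i

end MatrixCalculus

section CovariantCalculus

variable {n m : ℕ} {Γ : Conn n m} {A B : (Fin n → ℝ) → Matrix (Fin m) (Fin m) ℝ}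
  {φ : (Fin n → ℝ) → ℝ} {x : Fin n → ℝ}

lemma SmoothMat.covDer (hΓ : Smooth Γ) (hA : SmoothMat A) (i : Fin n) : SmoothMat (covDer Γ i A) :=
  (hA.pder i).add ((hΓ i).comm hA)

lemma smoothMat_curv (hΓ : Smooth Γ) (i j : Fin n) : SmoothMat (curv Γ i j) :=
  (((hΓ j).pder i).sub ((hΓ i).pder j)).add ((hΓ i).comm (hΓ j))

lemma covDer_neg (i : Fin n) (A : (Fin n → ℝ) → Matrix (Fin m) (Fin m) ℝ) (x : Fin n → ℝ) :
    covDer Γ i (fun y => -A y) x = -covDer Γ i A x := by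
  simp only [covDer, pder_neg, comm]
  noncomm_ring

lemma covDer_sub (hA : SmoothMat A) (hB : SmoothMat B) (i : Fin n) (x : Fin n → ℝ) :
    covDer Γ i (fun y => A y - B y) x = covDer Γ i A x - covDer Γ i B x := by
  simp only [covDer, pder_sub hA hB, comm]
  noncomm_ring

lemma covDer_sum {ι : Type*} {s : Finset ι} {A : ι → (Fin n → ℝ) → Matrix (Fin m) (Fin m) ℝ}
    (hA : ∀ l ∈ s, SmoothMat (A l)) (i : Fin n) (x : Fin n → ℝ) :
    covDer Γ i (fun y => ∑ l ∈ s, A l y) x = ∑ l ∈ s, covDer Γ i (A l) x := by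
  simp only [covDer, pder_sum hA, comm, Finset.sum_add_distrib, Finset.sum_sub_distrib,
    Finset.mul_sum, Finset.sum_mul]

lemma covDer_smul (hφ : DifferentiableAt ℝ φ x) (hA : SmoothMat A) (i : Fin n) :
    covDer Γ i (fun y => φ y • A y) x = partialDeriv i φ x • A x + φ x • covDer Γ i A x := by
  simp only [covDer, pder_smul hφ hA, comm, smul_add, smul_sub, mul_smul_comm, smul_mul_assoc]
  abel

lemma covDer_covDer_sub_covDer_covDer (hΓ : Smooth Γ) (hA : SmoothMat A) (i j : Fin n)
    (x : Fin n → ℝ) :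
    covDer Γ i (covDer Γ j A) x - covDer Γ j (covDer Γ i A) x = comm (curv Γ i j x) (A x) := by
  have hexpand : ∀ k l, covDer Γ k (covDer Γ l A) x
      = pder k (pder l A) x + (comm (pder k (fun y => Γ y l) x) (A x)
        + comm (Γ x l) (pder k A x)) + comm (Γ x k) (pder l A x + comm (Γ x l) (A x)) :=
    fun k l => by
      rw [← pder_comm (hΓ l) hA, ← pder_add (hA.pder l) ((hΓ l).comm hA)]
      rfl
  rw [hexpand, hexpand, pder_pder_comm hA i j]
  simp only [comm, curv]
  noncomm_ring

lemma curv_antisymm (Γ : Conn n m) (i j : Fin n) (x : Fin n → ℝ) :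
    curv Γ i j x = -curv Γ j i x := by
  simp only [curv, comm]
  abel

lemma covDer_curv (hΓ : Smooth Γ) (i j k : Fin n) (x : Fin n → ℝ) :
    covDer Γ i (curv Γ j k) x
      = pder i (pder j fun z => Γ z k) x - pder i (pder k fun z => Γ z j) x
        + (comm (pder i (fun y => Γ y j) x) (Γ x k) + comm (Γ x j) (pder i (fun y => Γ y k) x))
        + comm (Γ x i) (curv Γ j k x) := by
  rw [← pder_comm (hΓ j) (hΓ k), ← pder_sub ((hΓ k).pder j) ((hΓ j).pder k),
    ← pder_add (((hΓ k).pder j).sub ((hΓ j).pder k)) ((hΓ j).comm (hΓ k))]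
  rfl

theorem bianchi (hΓ : Smooth Γ) (i j k : Fin n) (x : Fin n → ℝ) :
    covDer Γ i (curv Γ j k) x = covDer Γ j (curv Γ i k) x - covDer Γ k (curv Γ i j) x := by
  rw [covDer_curv hΓ, covDer_curv hΓ, covDer_curv hΓ, pder_pder_comm (hΓ k) i j,
    pder_pder_comm (hΓ j) i k, pder_pder_comm (hΓ i) j k]
  simp only [comm, curv]
  noncomm_ring

lemma covDer_dstarF (hΓ : Smooth Γ) (j k : Fin n) (x : Fin n → ℝ) :
    covDer Γ j (dstarF Γ k) x = -∑ i, covDer Γ j (covDer Γ i (curv Γ i k)) x := by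
  rw [← covDer_sum fun i _ => (smoothMat_curv hΓ i k).covDer hΓ i, ← covDer_neg]
  rfl

theorem sum_covDer_covDer_curv (hΓ : Smooth Γ) (j k : Fin n) (x : Fin n → ℝ) :
    ∑ i, covDer Γ i (covDer Γ i (curv Γ j k)) x
      = covDer Γ k (dstarF Γ j) x - covDer Γ j (dstarF Γ k) x
        + (2 : ℝ) • ∑ i, comm (curv Γ i j x) (curv Γ i k x) := by
  have hF := smoothMat_curv hΓ
  have hterm : ∀ i, covDer Γ i (covDer Γ i (curv Γ j k)) x
      = covDer Γ j (covDer Γ i (curv Γ i k)) x - covDer Γ k (covDer Γ i (curv Γ i j)) x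
        + (2 : ℝ) • comm (curv Γ i j x) (curv Γ i k x) := fun i => by
    have hbianchi : covDer Γ i (curv Γ j k)
        = fun y => covDer Γ j (curv Γ i k) y - covDer Γ k (curv Γ i j) y :=
      funext (bianchi hΓ i j k)
    have hanti : comm (curv Γ i k x) (curv Γ i j x) = -comm (curv Γ i j x) (curv Γ i k x) :=
      (neg_sub _ _).symm
    rw [hbianchi, covDer_sub ((hF i k).covDer hΓ j) ((hF i j).covDer hΓ k),
      ← sub_add_cancel (covDer Γ i (covDer Γ j (curv Γ i k)) x)
        (covDer Γ j (covDer Γ i (curv Γ i k)) x),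
      ← sub_add_cancel (covDer Γ i (covDer Γ k (curv Γ i j)) x)
        (covDer Γ k (covDer Γ i (curv Γ i j)) x),
      covDer_covDer_sub_covDer_covDer hΓ (hF i k), covDer_covDer_sub_covDer_covDer hΓ (hF i j),
      hanti]
    module
  simp only [hterm, covDer_dstarF hΓ, Finset.sum_add_distrib, Finset.sum_sub_distrib,
    Finset.smul_sum]
  abel

lemma covDer_dstarF_of_isSolitonAt {x₀ : Fin n → ℝ} {t₀ : ℝ} (hΓ : Smooth Γ)
    (hsol : IsSolitonAt Γ x₀ t₀) (j k : Fin n) (x : Fin n → ℝ) :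
    covDer Γ j (dstarF Γ k) x
      = -(1 / (2 * t₀)) • (curv Γ j k x + ∑ i, (x i - x₀ i) • covDer Γ j (curv Γ i k) x) := by
  have hcoord : ∀ i, DifferentiableAt ℝ (fun y : Fin n → ℝ => y i - x₀ i) x := fun i => by
    fun_prop
  have hweight : ∀ i, ContDiff ℝ (⊤ : ℕ∞)
      fun y : Fin n → ℝ => -(1 / (2 * t₀)) * (y i - x₀ i) := fun i => by fun_prop
  have hdstar : dstarF Γ k = fun y => ∑ i, (-(1 / (2 * t₀)) * (y i - x₀ i)) • curv Γ i k y :=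
    funext fun y => by
      rw [dstarF, hsol y k, ← neg_smul, Finset.smul_sum]
      simp only [mul_smul]
  have hterm : ∀ i, covDer Γ j (fun y => (-(1 / (2 * t₀)) * (y i - x₀ i)) • curv Γ i k y) x
      = -(1 / (2 * t₀)) • ((if i = j then curv Γ i k x else 0)
        + (x i - x₀ i) • covDer Γ j (curv Γ i k) x) := fun i => by
    rw [covDer_smul ((hcoord i).const_mul _) (smoothMat_curv hΓ i k),
      partialDeriv_const_mul (hcoord i), partialDeriv_coord_sub, mul_smul, mul_smul, ite_smul,
      one_smul, zero_smul, smul_add]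
  rw [hdstar, covDer_sum fun i _ => (smoothMat_curv hΓ i k).smul (hweight i)]
  simp only [hterm, ← Finset.smul_sum, Finset.sum_add_distrib, Finset.sum_ite_eq',
    Finset.mem_univ, if_true]

/-- The covariant drift Laplacian `∑ᵢ (∇ᵢ∇ᵢA - κ (x - x₀)ᵢ ∇ᵢA)`, the analogue of `driftLaplacian`
for sections of the endomorphism bundle. -/
def covDriftLaplacian (Γ : Conn n m) (κ : ℝ) (x₀ : Fin n → ℝ)
    (A : (Fin n → ℝ) → Matrix (Fin m) (Fin m) ℝ) (x : Fin n → ℝ) : Matrix (Fin m) (Fin m) ℝ :=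
  ∑ i, (covDer Γ i (covDer Γ i A) x - (κ * (x i - x₀ i)) • covDer Γ i A x)

theorem covDriftLaplacian_curv {x₀ : Fin n → ℝ} {t₀ : ℝ} (hΓ : Smooth Γ)
    (hsol : IsSolitonAt Γ x₀ t₀) (j k : Fin n) (x : Fin n → ℝ) :
    covDriftLaplacian Γ (1 / (2 * t₀)) x₀ (curv Γ j k) x
      = (1 / t₀) • curv Γ j k x + (2 : ℝ) • ∑ i, comm (curv Γ i j x) (curv Γ i k x) := by
  have hdrift : ∑ i, (1 / (2 * t₀) * (x i - x₀ i)) • covDer Γ i (curv Γ j k) x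
      = (1 / (2 * t₀)) • (∑ i, (x i - x₀ i) • covDer Γ j (curv Γ i k) x
        - ∑ i, (x i - x₀ i) • covDer Γ k (curv Γ i j) x) := by
    simp only [bianchi hΓ _ j k, mul_smul, smul_sub, Finset.sum_sub_distrib, Finset.smul_sum]
  have ht₀ : 1 / t₀ = 1 / (2 * t₀) + 1 / (2 * t₀) := by ring
  rw [covDriftLaplacian, Finset.sum_sub_distrib, sum_covDer_covDer_curv hΓ, hdrift,
    covDer_dstarF_of_isSolitonAt hΓ hsol, covDer_dstarF_of_isSolitonAt hΓ hsol,
    curv_antisymm Γ k j, ht₀]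
  module

end CovariantCalculus

section Bochner

variable {n m : ℕ} {Γ : Conn n m} {A B : (Fin n → ℝ) → Matrix (Fin m) (Fin m) ℝ}
  {x₀ : Fin n → ℝ} {t₀ : ℝ}

lemma MetricCompat.transpose_curv (hmc : MetricCompat Γ) (i j : Fin n) (x : Fin n → ℝ) :
    (curv Γ i j x)ᵀ = -curv Γ i j x := by
  have hpder : ∀ i j, (pder i (fun y => Γ y j) x)ᵀ = -pder i (fun y => Γ y j) x := fun i j => by
    rw [← pder_transpose, ← pder_neg]
    simp only [hmc _ j]
  rw [curv, transpose_add, transpose_sub, hpder, hpder, transpose_comm_eq_neg (hmc x i) (hmc x j)]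
  abel

lemma MetricCompat.partialDeriv_frobInner (hmc : MetricCompat Γ) (hA : SmoothMat A)
    (hB : SmoothMat B) (i : Fin n) (x : Fin n → ℝ) :
    partialDeriv i (fun y => frobInner (A y) (B y)) x
      = frobInner (covDer Γ i A x) (B x) + frobInner (A x) (covDer Γ i B x) := by
  have hcancel := frobInner_comm_add_frobInner_comm (hmc x i) (A x) (B x)
  rw [YM.partialDeriv_frobInner hA hB, frobInner_symm (A x) (covDer Γ i B x), covDer, covDer,
    frobInner_add_left, frobInner_add_left, frobInner_symm (pder i B x),
    frobInner_symm (comm _ (B x))]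
  linarith

theorem MetricCompat.driftLaplacian_frobSq (hmc : MetricCompat Γ) (hΓ : Smooth Γ)
    (hA : SmoothMat A) (κ : ℝ) (x₀ x : Fin n → ℝ) :
    driftLaplacian κ x₀ (fun y => frobSq (A y)) x
      = 2 * frobInner (covDriftLaplacian Γ κ x₀ A x) (A x)
        + 2 * ∑ i, frobSq (covDer Γ i A x) := by
  have grad : ∀ i, partialDeriv i (fun y => frobSq (A y))
      = fun y => 2 * frobInner (covDer Γ i A y) (A y) := fun i => funext fun y => by
    simp only [← frobInner_self]
    rw [hmc.partialDeriv_frobInner hA hA, frobInner_symm (A y), two_mul]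
  have hess : ∀ i, partialDeriv i (fun y => 2 * frobInner (covDer Γ i A y) (A y)) x
      = 2 * (frobInner (covDer Γ i (covDer Γ i A) x) (A x) + frobSq (covDer Γ i A x)) := fun i => by
    have hdA := hA.covDer hΓ i
    rw [partialDeriv_const_mul ((hdA.contDiff_frobInner hA).differentiable (by simp) x),
      hmc.partialDeriv_frobInner hdA hA, frobInner_self]
  simp only [driftLaplacian, covDriftLaplacian, grad, hess, frobInner_sum_left, frobInner_sub_left,
    frobInner_smul_left, Finset.mul_sum, ← Finset.sum_add_distrib]
  exact Finset.sum_congr rfl fun i _ => by ring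

lemma normSqF_nonneg (Γ : Conn n m) (x : Fin n → ℝ) : 0 ≤ normSqF Γ x :=
  Finset.sum_nonneg fun _ _ => Finset.sum_nonneg fun _ _ => frobSq_nonneg _

lemma normF_sq (Γ : Conn n m) (x : Fin n → ℝ) : normF Γ x ^ 2 = normSqF Γ x :=
  Real.sq_sqrt (normSqF_nonneg Γ x)

lemma normSqF_eq_zero_iff {x : Fin n → ℝ} : normSqF Γ x = 0 ↔ ∀ i j, curv Γ i j x = 0 := by
  have hrow : ∀ i, 0 ≤ ∑ j, frobSq (curv Γ i j x) := fun i =>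
    Finset.sum_nonneg fun j _ => frobSq_nonneg _
  simp only [normSqF, Finset.sum_eq_zero_iff_of_nonneg fun i _ => hrow i,
    Finset.sum_eq_zero_iff_of_nonneg fun j _ => frobSq_nonneg (curv Γ _ j x), Finset.mem_univ,
    true_implies, frobSq_eq_zero_iff]

lemma contDiff_frobSq_curv (hΓ : Smooth Γ) (i j : Fin n) :
    ContDiff ℝ (⊤ : ℕ∞) fun x => frobSq (curv Γ i j x) := by
  simpa only [frobInner_self] using
    (smoothMat_curv hΓ i j).contDiff_frobInner (smoothMat_curv hΓ i j)

lemma contDiff_normSqF (hΓ : Smooth Γ) : ContDiff ℝ (⊤ : ℕ∞) (normSqF Γ) :=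
  ContDiff.sum fun i _ => ContDiff.sum fun j _ => contDiff_frobSq_curv hΓ i j

theorem driftLaplacian_normSqF (hΓ : Smooth Γ) (hmc : MetricCompat Γ)
    (hsol : IsSolitonAt Γ x₀ t₀) (x : Fin n → ℝ) :
    driftLaplacian (1 / (2 * t₀)) x₀ (normSqF Γ) x
      = 2 / t₀ * normSqF Γ x
        + 4 * ∑ j, ∑ k, ∑ i, frobInner (comm (curv Γ i j x) (curv Γ i k x)) (curv Γ j k x)
        + 2 * ∑ j, ∑ k, ∑ i, frobSq (covDer Γ i (curv Γ j k) x) := by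
  have hsmooth : ∀ j k, ContDiff ℝ 2 fun y => frobSq (curv Γ j k y) := fun j k =>
    contDiff_infty.1 (contDiff_frobSq_curv hΓ j k) 2
  have hterm : ∀ j k, driftLaplacian (1 / (2 * t₀)) x₀ (fun y => frobSq (curv Γ j k y)) x
      = 2 / t₀ * frobSq (curv Γ j k x)
        + 4 * ∑ i, frobInner (comm (curv Γ i j x) (curv Γ i k x)) (curv Γ j k x)
        + 2 * ∑ i, frobSq (covDer Γ i (curv Γ j k) x) := fun j k => by
    rw [hmc.driftLaplacian_frobSq hΓ (smoothMat_curv hΓ j k), covDriftLaplacian_curv hΓ hsol,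
      frobInner_add_left, frobInner_smul_left, frobInner_smul_left, frobInner_sum_left,
      frobInner_self]
    ring
  calc driftLaplacian (1 / (2 * t₀)) x₀ (normSqF Γ) x
      = ∑ j, ∑ k, driftLaplacian (1 / (2 * t₀)) x₀ (fun y => frobSq (curv Γ j k y)) x := by
        simp only [← driftLaplacian_sum fun k _ => hsmooth _ k,
          ← driftLaplacian_sum fun j _ => ContDiff.sum fun k _ => hsmooth j k]
        rfl
    _ = _ := by
        simp only [hterm, Finset.sum_add_distrib, ← Finset.mul_sum, normSqF]

theorem mul_normSqF_le_driftLaplacian (hΓ : Smooth Γ) (hmc : MetricCompat Γ)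
    (hsol : IsSolitonAt Γ x₀ t₀) (x : Fin n → ℝ) :
    (2 / t₀ - 4 * normF Γ x) * normSqF Γ x
      ≤ driftLaplacian (1 / (2 * t₀)) x₀ (normSqF Γ) x := by
  have hcubic : -normF Γ x ^ 3
      ≤ ∑ j, ∑ k, ∑ i, frobInner (comm (curv Γ i j x) (curv Γ i k x)) (curv Γ j k x) :=
    neg_le_of_abs_le (abs_sum_frobInner_comm_le fun i j => hmc.transpose_curv i j x)
  have hgrad : 0 ≤ ∑ j, ∑ k, ∑ i, frobSq (covDer Γ i (curv Γ j k) x) :=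
    Finset.sum_nonneg fun j _ => Finset.sum_nonneg fun k _ => Finset.sum_nonneg fun i _ =>
      frobSq_nonneg _
  have hcube : normF Γ x * normSqF Γ x = normF Γ x ^ 3 := by rw [← normF_sq]; ring
  rw [driftLaplacian_normSqF hΓ hmc hsol]
  linarith

end Bochner

end YM

theorem gap_theorem_general {n m : ℕ} {Γ : YM.Conn n m} {x₀ : Fin n → ℝ} {t₀ δ : ℝ}
    (ht₀ : 0 < t₀) (hΓ : YM.Smooth Γ) (hmc : YM.MetricCompat Γ) (hsol : YM.IsSolitonAt Γ x₀ t₀)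
    (hδ : δ < 1 / (2 * t₀)) (hbd : ∀ x, YM.normF Γ x ≤ δ) (i j : Fin n) (x : Fin n → ℝ) :
    YM.curv Γ i j x = 0 := by
  have hbdd : BddAbove (Set.range (YM.normSqF Γ)) := by
    refine ⟨δ ^ 2, ?_⟩
    rintro _ ⟨y, rfl⟩
    exact YM.normF_sq Γ y ▸ pow_le_pow_left₀ (Real.sqrt_nonneg _) (hbd y) 2
  have hsub : ∀ y, 4 * (1 / (2 * t₀) - δ) * YM.normSqF Γ y
      ≤ YM.driftLaplacian (1 / (2 * t₀)) x₀ (YM.normSqF Γ) y := fun y => by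
    refine le_trans ?_ (YM.mul_normSqF_le_driftLaplacian hΓ hmc hsol y)
    refine mul_le_mul_of_nonneg_right ?_ (YM.normSqF_nonneg Γ y)
    linarith [hbd y, show 4 * (1 / (2 * t₀)) = 2 / t₀ by ring]
  have hnonpos : YM.normSqF Γ x ≤ 0 :=
    YM.nonpos_of_mul_le_driftLaplacian (by linarith) (by positivity)
      (contDiff_infty.1 (YM.contDiff_normSqF hΓ) 2) hbdd hsub x
  exact YM.normSqF_eq_zero_iff.1 (hnonpos.antisymm (YM.normSqF_nonneg Γ x)) i j

/-- **Gap theorem** (Theorem 1.2): a metric-compatible `(0,1)`-soliton on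
`ℝⁿ × ℝᵐ` with `|F| ≤ 3/8` everywhere is flat. -/
theorem gap_theorem (n m : ℕ) (hn : 1 ≤ n) (hm : 1 ≤ m)
    (Γ : YM.Conn n m) (hsm : YM.Smooth Γ) (hmc : YM.MetricCompat Γ)
    (hsol : YM.IsSoliton Γ)
    (hbd : ∀ x : Fin n → ℝ, YM.normF Γ x ≤ 3 / 8) :
    ∀ (i j : Fin n) (x : Fin n → ℝ), YM.curv Γ i j x = 0 :=
  gap_theorem_general one_pos hsm hmc hsol (by norm_num) hbd
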